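/- Let W be a Weyl candidate on 4-dimensional Minkowski space and T its Bel–Robinson tensor (generalized dominant property). If u₁, u₂, u₃, u₄ : Fin 4 → ℝ are causal future-directed vectors (i.e. ∑_{a,b} η a b · uᵢ a · uᵢ b ≤ 0 and uᵢ 0 > 0 for each i), then ∑_{a,b,c,d} T a b c d · u₁ a · u₂ b · u₃ c · u₄ d ≥ 0. -/

import Mathlib

/-!
In terms of a basis `S¹, S², S³` of the self-dual bivectors, a Weyl candidate is
`W = Re (Qₖₗ Sᵏ ⊗ Sˡ)`, with `Q = E - iB` built from its electric and magnetic parts. In the square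
of `W` the terms in `Q ⊗ Q` contract self-dual bivectors with each other; by the Clifford relation
these contractions are proportional to `η` after symmetrization, and the trace term of the
Bel–Robinson tensor removes them. What remains is `T(u₁, u₂, u₃, u₄) = Re tr(H₁₂ᵀ Q H₃₄ Q†)`, where
`H(u, v)` contracts self-dual with anti-self-dual bivectors. In spinors, `H(u, v) = ½ P† (U ⊗ V) P`
with `U = u⁰ + u¹σ₁ + u²σ₂ + u³σ₃`, which is positive semidefinite for causal future-directed `u`.
Hence so is `H(u, v)`, and `Re tr(Xᵀ Q Y Q†) ≥ 0` for positive semidefinite `X` and `Y`.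
-/

/-- The Minkowski metric `η` on `Fin 4`: `η 0 0 = -1`, `η a a = 1` for `a ≠ 0`,
and `η a b = 0` for `a ≠ b`. -/
def eta (a b : Fin 4) : ℝ := if a = b then (if a = 0 then -1 else 1) else 0

/-- A Weyl candidate on 4-dimensional Minkowski space. -/
def IsWeylCandidate (W : Fin 4 → Fin 4 → Fin 4 → Fin 4 → ℝ) : Prop :=
  (∀ a b c d, W a b c d = - W b a c d) ∧
  (∀ a b c d, W a b c d = - W a b d c) ∧
  (∀ a b c d, W a b c d = W c d a b) ∧
  (∀ a b c d, W a b c d + W a c d b + W a d b c = 0) ∧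
  (∀ b c, ∑ p : Fin 4, ∑ q : Fin 4, eta p q * W p b q c = 0)

/-- The Bel–Robinson tensor of a Weyl candidate `W`. -/
noncomputable def belRobinson (W : Fin 4 → Fin 4 → Fin 4 → Fin 4 → ℝ) (a b c d : Fin 4) : ℝ :=
  (∑ p : Fin 4, ∑ q : Fin 4, ∑ m : Fin 4, ∑ n : Fin 4,
      eta p q * eta m n * (W a p d m * W b q c n + W a m c p * W b n d q))
  - (1/8) * eta a b * eta c d *
      (∑ m : Fin 4, ∑ n : Fin 4, ∑ p : Fin 4, ∑ l : Fin 4, W m n p l *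
        (∑ m' : Fin 4, ∑ n' : Fin 4, ∑ p' : Fin 4, ∑ l' : Fin 4,
          eta m m' * eta n n' * eta p p' * eta l l' * W m' n' p' l'))

open Matrix
open scoped ComplexOrder Kronecker

/-! ### The future causal cone -/

/-- Causal future-directed vectors, in the signature `(-, +, +, +)`. -/
def IsFutureCausal (u : Fin 4 → ℝ) : Prop :=
  (∑ a : Fin 4, ∑ b : Fin 4, eta a b * u a * u b) ≤ 0 ∧ 0 < u 0

/-- The Hermitian matrix `u⁰ + u¹σ₁ + u²σ₂ + u³σ₃` of a vector `u`, with `σᵢ` the Pauli matrices.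
Its determinant is minus the Minkowski square of `u`. -/
noncomputable def spinMatrix (u : Fin 4 → ℝ) : Matrix (Fin 2) (Fin 2) ℂ :=
  !![(u 0 : ℂ) + u 3, u 1 - u 2 * Complex.I; u 1 + u 2 * Complex.I, u 0 - u 3]

lemma spinMatrix_cayley_hamilton (u : Fin 4 → ℝ) :
    (2 * u 0) • spinMatrix u = (spinMatrix u)ᴴ * spinMatrix u +
      (u 0 ^ 2 - u 1 ^ 2 - u 2 ^ 2 - u 3 ^ 2) • (1 : Matrix (Fin 2) (Fin 2) ℂ) := by
  ext i j
  fin_cases i <;> fin_cases j <;>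
    simp [spinMatrix, mul_apply, Fin.sum_univ_two] <;> ring_nf <;> simp

lemma IsFutureCausal.posSemidef_spinMatrix {u : Fin 4 → ℝ} (hu : IsFutureCausal u) :
    (spinMatrix u).PosSemidef := by
  obtain ⟨hcausal, hfuture⟩ := hu
  have hdet : 0 ≤ u 0 ^ 2 - u 1 ^ 2 - u 2 ^ 2 - u 3 ^ 2 := by
    simp [Fin.sum_univ_four, eta] at hcausal
    linarith
  have hscaled : ((2 * u 0) • spinMatrix u).PosSemidef := by
    rw [spinMatrix_cayley_hamilton]
    exact (posSemidef_conjTranspose_mul_self _).add (PosSemidef.one.smul hdet)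
  have hpos : 0 < 2 * u 0 := by positivity
  simpa only [inv_smul_smul₀ hpos.ne'] using hscaled.smul (inv_nonneg.mpr hpos.le)

/-! ### Self-dual bivectors -/

/-- The metric `η` as a complex matrix. -/
noncomputable def etaMatrix : Matrix (Fin 4) (Fin 4) ℂ := of fun a b => (eta a b : ℂ)

lemma etaMatrix_eq_diagonal : etaMatrix = diagonal ![-1, 1, 1, 1] := by
  ext a b
  fin_cases a <;> fin_cases b <;> simp [etaMatrix, eta]

lemma etaMatrix_transpose : etaMatrixᵀ = etaMatrix := by
  simp [etaMatrix_eq_diagonal]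

/-- The basis `Sᵏ` of the self-dual bivectors with `Sᵏ₀ⱼ = δₖⱼ` and `Sᵏᵢⱼ = i εₖᵢⱼ`, where `k`, `i`
and `j` are spatial. -/
noncomputable def selfDualBasis : Fin 3 → Matrix (Fin 4) (Fin 4) ℂ :=
  ![!![0, 1, 0, 0; -1, 0, 0, 0; 0, 0, 0, Complex.I; 0, 0, -Complex.I, 0],
    !![0, 0, 1, 0; 0, 0, 0, -Complex.I; -1, 0, 0, 0; 0, Complex.I, 0, 0],
    !![0, 0, 0, 1; 0, 0, Complex.I, 0; 0, -Complex.I, 0, 0; -1, 0, 0, 0]]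

lemma selfDualBasis_zero_succ (k l : Fin 3) :
    selfDualBasis k 0 l.succ = if k = l then 1 else 0 := by
  fin_cases k <;> fin_cases l <;> rfl

lemma selfDualBasis_succ_succ (k l : Fin 3) :
    selfDualBasis k (l + 1).succ (l + 2).succ = if k = l then Complex.I else 0 := by
  fin_cases k <;> fin_cases l <;> simp [selfDualBasis]

lemma selfDualBasis_antisymm (k : Fin 3) (a b : Fin 4) :
    selfDualBasis k a b = -selfDualBasis k b a := by
  fin_cases k <;> fin_cases a <;> fin_cases b <;> simp [selfDualBasis]

/-- The matrix with entries `uᵃ Sᵏ_a_p`: the self-dual bivectors with one slot filled by `u`. -/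
noncomputable def selfDualSlot (u : Fin 4 → ℝ) : Matrix (Fin 3) (Fin 4) ℂ :=
  of fun k p => ∑ a, (u a : ℂ) * selfDualBasis k a p

lemma selfDualSlot_single (a p : Fin 4) (k : Fin 3) :
    selfDualSlot (Pi.single a 1) k p = selfDualBasis k a p := by
  simp [selfDualSlot, Pi.single_apply, apply_ite Complex.ofReal]

lemma selfDualSlot_eq (u : Fin 4 → ℝ) : selfDualSlot u =
    !![-(u 1 : ℂ), (u 0 : ℂ), -(u 3 * Complex.I), u 2 * Complex.I;
      -(u 2 : ℂ), u 3 * Complex.I, (u 0 : ℂ), -(u 1 * Complex.I);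
      -(u 3 : ℂ), -(u 2 * Complex.I), u 1 * Complex.I, (u 0 : ℂ)] := by
  ext k p
  fin_cases k <;> fin_cases p <;> simp [selfDualSlot, selfDualBasis, Fin.sum_univ_four]

lemma selfDualSlot_eq_sum (u : Fin 4 → ℝ) :
    selfDualSlot u = ∑ a, u a • selfDualSlot (Pi.single a 1) := by
  ext k p
  simp only [Matrix.sum_apply, Matrix.smul_apply, selfDualSlot_single, Complex.real_smul]
  rfl

/-- The contractions `uᵃ vᵇ ηᵖᵠ Sᵏ_a_p Sˡ_b_q` of self-dual bivectors with each other; their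
symmetric part is given by the Clifford relation. -/
noncomputable def cliffordMatrix (u v : Fin 4 → ℝ) : Matrix (Fin 3) (Fin 3) ℂ :=
  selfDualSlot u * etaMatrix * (selfDualSlot v)ᵀ

/-- The contractions `uᵃ vᵇ ηᵖᵠ Sᵏ_a_p conj(Sˡ_b_q)` of self-dual with anti-self-dual bivectors. The
associated Hermitian form is, up to normalization, the stress-energy tensor of an electromagnetic
field contracted with `u` and `v`. -/
noncomputable def maxwellMatrix (u v : Fin 4 → ℝ) : Matrix (Fin 3) (Fin 3) ℂ :=
  selfDualSlot u * etaMatrix * (selfDualSlot v)ᴴ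

lemma mul_etaMatrix_mul_apply {m n : Type*} (X : Matrix m (Fin 4) ℂ) (Y : Matrix (Fin 4) n ℂ)
    (i : m) (j : n) : (X * etaMatrix * Y) i j =
      -(X i 0 * Y 0 j) + X i 1 * Y 1 j + X i 2 * Y 2 j + X i 3 * Y 3 j := by
  simp [etaMatrix_eq_diagonal, mul_apply, Fin.sum_univ_four]

lemma cliffordMatrix_transpose (u v : Fin 4 → ℝ) :
    (cliffordMatrix u v)ᵀ = cliffordMatrix v u := by
  simp [cliffordMatrix, etaMatrix_transpose, Matrix.mul_assoc]

lemma cliffordMatrix_add_swap (u v : Fin 4 → ℝ) :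
    cliffordMatrix u v + cliffordMatrix v u =
      (-2 * ∑ a, ∑ b, eta a b * u a * v b) • (1 : Matrix (Fin 3) (Fin 3) ℂ) := by
  ext k l
  rw [Matrix.add_apply, cliffordMatrix, cliffordMatrix, mul_etaMatrix_mul_apply,
    mul_etaMatrix_mul_apply, selfDualSlot_eq, selfDualSlot_eq]
  fin_cases k <;> fin_cases l <;> simp [eta, Fin.sum_univ_four] <;> ring_nf <;>
    simp [Complex.I_sq] <;> ring

lemma maxwellMatrix_comm (u v : Fin 4 → ℝ) : maxwellMatrix u v = maxwellMatrix v u := by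
  ext k l
  rw [maxwellMatrix, maxwellMatrix, mul_etaMatrix_mul_apply, mul_etaMatrix_mul_apply,
    selfDualSlot_eq, selfDualSlot_eq]
  fin_cases k <;> fin_cases l <;> simp <;> ring_nf <;> simp [Complex.I_sq] <;> ring

lemma maxwellMatrix_eq_sum (u v : Fin 4 → ℝ) : maxwellMatrix u v =
    ∑ a, ∑ b, (u a * v b) • maxwellMatrix (Pi.single a 1) (Pi.single b 1) := by
  simp only [maxwellMatrix]
  conv_lhs => rw [selfDualSlot_eq_sum u, selfDualSlot_eq_sum v]
  simp only [conjTranspose_sum, conjTranspose_smul, star_trivial, Matrix.sum_mul, Matrix.mul_sum,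
    Matrix.smul_mul, Matrix.mul_smul, Finset.smul_sum, smul_smul]
  rw [Finset.sum_comm]
  simp only [mul_comm]

lemma sum_eta_smul_cliffordMatrix :
    ∑ a, ∑ b, eta a b • cliffordMatrix (Pi.single a 1) (Pi.single b 1) =
      (-4 : ℝ) • (1 : Matrix (Fin 3) (Fin 3) ℂ) := by
  ext k l
  simp only [cliffordMatrix, Matrix.sum_apply, Matrix.smul_apply, mul_etaMatrix_mul_apply,
    transpose_apply, selfDualSlot_single]
  fin_cases k <;> fin_cases l <;>
    simp [eta, selfDualBasis, Fin.sum_univ_four] <;> norm_num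

lemma sum_eta_smul_maxwellMatrix :
    ∑ a, ∑ b, eta a b • maxwellMatrix (Pi.single a 1) (Pi.single b 1) = 0 := by
  ext k l
  simp only [maxwellMatrix, Matrix.sum_apply, Matrix.smul_apply, mul_etaMatrix_mul_apply,
    conjTranspose_apply, selfDualSlot_single]
  fin_cases k <;> fin_cases l <;> simp [eta, selfDualBasis, Fin.sum_univ_four]

/-- The isomorphism from self-dual bivectors to symmetric spinors of rank two: up to a common sign,
the `i`-th column is the matrix `σᵢε` flattened to a vector. -/
noncomputable def symSpinor : Matrix (Fin 2 × Fin 2) (Fin 3) ℂ :=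
  of fun A i => (![!![1, 0; 0, -1], !![-Complex.I, 0; 0, -Complex.I], !![0, -1; -1, 0]] i :
    Matrix (Fin 2) (Fin 2) ℂ) A.1 A.2

lemma maxwellMatrix_eq_kronecker (u v : Fin 4 → ℝ) : maxwellMatrix u v =
    (1 / 2 : ℝ) • (symSpinorᴴ * (spinMatrix u ⊗ₖ spinMatrix v) * symSpinor) := by
  ext k l
  rw [maxwellMatrix, mul_etaMatrix_mul_apply, selfDualSlot_eq, selfDualSlot_eq]
  fin_cases k <;> fin_cases l <;>
    simp [symSpinor, spinMatrix, mul_apply, Fintype.sum_prod_type, Fin.sum_univ_two] <;>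
    ring_nf <;> simp [Complex.I_sq] <;> ring

lemma posSemidef_maxwellMatrix {u v : Fin 4 → ℝ} (hu : IsFutureCausal u)
    (hv : IsFutureCausal v) : (maxwellMatrix u v).PosSemidef := by
  rw [maxwellMatrix_eq_kronecker]
  exact ((hu.posSemidef_spinMatrix.kronecker
    hv.posSemidef_spinMatrix).conjTranspose_mul_mul_same _).smul (by norm_num)

/-! ### Trace forms -/

section TraceForm

variable {m n : Type*} [Fintype m] [Fintype n]

/-- The real bilinear form `X, Y ↦ Re tr(Xᵀ Q Y R)`, for `R = Q†` the Hermitian form of `X ⊗ Y`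
evaluated at `Q`, up to transposition. -/
noncomputable def traceForm (Q : Matrix m n ℂ) (R : Matrix n m ℂ) (X : Matrix m m ℂ)
    (Y : Matrix n n ℂ) : ℝ :=
  (Xᵀ * Q * Y * R).trace.re

lemma traceForm_sum_smul_sum_smul {ι κ : Type*} (s : Finset ι) (t : Finset κ) (f : ι → ℝ)
    (g : κ → ℝ) (Q : Matrix m n ℂ) (R : Matrix n m ℂ) (X : ι → Matrix m m ℂ)
    (Y : κ → Matrix n n ℂ) :
    traceForm Q R (∑ i ∈ s, f i • X i) (∑ j ∈ t, g j • Y j) =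
      ∑ i ∈ s, ∑ j ∈ t, f i * g j * traceForm Q R (X i) (Y j) := by
  simp only [traceForm, transpose_sum, transpose_smul, Matrix.sum_mul, Matrix.mul_sum,
    Matrix.smul_mul, Matrix.mul_smul, trace_sum, trace_smul, Complex.re_sum, Complex.smul_re,
    smul_eq_mul]
  rw [Finset.sum_comm]
  simp only [Finset.mul_sum, mul_assoc, mul_left_comm]

lemma sum_sum_mul_traceForm {ι κ : Type*} [Fintype ι] [Fintype κ] (Q : Matrix m n ℂ)
    (R : Matrix n m ℂ) (f : ι → ι → ℝ) (g : κ → κ → ℝ) (X : ι → ι → Matrix m m ℂ)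
    (Y : κ → κ → Matrix n n ℂ) :
    ∑ a, ∑ b, ∑ c, ∑ d, f a b * g c d * traceForm Q R (X a b) (Y c d) =
      traceForm Q R (∑ a, ∑ b, f a b • X a b) (∑ c, ∑ d, g c d • Y c d) := by
  simpa only [Fintype.sum_prod_type] using (traceForm_sum_smul_sum_smul Finset.univ Finset.univ
    (fun x : ι × ι => f x.1 x.2) (fun x : κ × κ => g x.1 x.2) Q R
    (fun x => X x.1 x.2) (fun x => Y x.1 x.2)).symm

lemma traceForm_add_right (Q : Matrix m n ℂ) (R : Matrix n m ℂ) (X : Matrix m m ℂ)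
    (Y Y' : Matrix n n ℂ) :
    traceForm Q R X (Y + Y') = traceForm Q R X Y + traceForm Q R X Y' := by
  simp [traceForm, Matrix.mul_add, Matrix.add_mul]

lemma traceForm_conjTranspose_nonneg (Q : Matrix m n ℂ) {X : Matrix m m ℂ}
    {Y : Matrix n n ℂ} (hX : X.PosSemidef) (hY : Y.PosSemidef) : 0 ≤ traceForm Q Qᴴ X Y := by
  have hform := (hY.transpose.kronecker hX.transpose).dotProduct_mulVec_nonneg (vec Q)
  rw [kronecker_mulVec_vec, star_vec_dotProduct_vec, transpose_transpose, trace_mul_comm] at hform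
  exact (Complex.le_def.mp hform).1

end TraceForm

/-! ### Squares of four-index tensors -/

lemma sum_eta_mul (p : Fin 4) (f : Fin 4 → ℝ) : ∑ q, eta p q * f q = eta p p * f p := by
  simp [eta]

/-- The contraction `ηᵖᵠ ηᵐⁿ W_a_p_c_m W_b_q_d_n` over the second and fourth slots. -/
noncomputable def pairContraction (W : Fin 4 → Fin 4 → Fin 4 → Fin 4 → ℝ) (a b c d : Fin 4) : ℝ :=
  ∑ p, ∑ q, ∑ m, ∑ n, eta p q * eta m n * (W a p c m * W b q d n)

lemma pairContraction_eq_diagonal (W : Fin 4 → Fin 4 → Fin 4 → Fin 4 → ℝ) (a b c d : Fin 4) :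
    pairContraction W a b c d = ∑ p, ∑ m, eta p p * eta m m * (W a p c m * W b p d m) := by
  simp only [pairContraction, mul_assoc, ← Finset.mul_sum, sum_eta_mul]

lemma belRobinson_eq_pairContraction (W : Fin 4 → Fin 4 → Fin 4 → Fin 4 → ℝ) (a b c d : Fin 4) :
    belRobinson W a b c d = pairContraction W a b d c + pairContraction W a b c d -
      (1 / 8) * eta a b * eta c d *
        ∑ m, ∑ n, ∑ p, ∑ l, eta m n * eta p l * pairContraction W m n p l := by
  have hquadratic : ∑ p, ∑ q, ∑ m, ∑ n, eta p q * eta m n *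
        (W a p d m * W b q c n + W a m c p * W b n d q) =
      pairContraction W a b d c + pairContraction W a b c d := by
    simp only [pairContraction_eq_diagonal, mul_assoc, ← Finset.mul_sum, sum_eta_mul, mul_add,
      Finset.sum_add_distrib]
    congr 1
    simp only [Finset.mul_sum]
    rw [Finset.sum_comm]
    simp only [mul_left_comm]
  have hsquare : ∑ m, ∑ n, ∑ p, ∑ l, W m n p l * ∑ m', ∑ n', ∑ p', ∑ l',
        eta m m' * eta n n' * eta p p' * eta l l' * W m' n' p' l' =
      ∑ m, ∑ n, ∑ p, ∑ l, eta m n * eta p l * pairContraction W m n p l := by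
    simp only [pairContraction_eq_diagonal, mul_assoc, ← Finset.mul_sum, sum_eta_mul]
    simp only [Finset.mul_sum]
    refine Finset.sum_congr rfl fun m _ => ?_
    rw [Finset.sum_comm]
    refine Finset.sum_congr rfl fun p _ => Finset.sum_congr rfl fun n _ =>
      Finset.sum_congr rfl fun l _ => ?_
    ring
  rw [belRobinson, hquadratic, hsquare]

/-! ### The Bel–Robinson tensor of a self-dual tensor -/

/-- The tensor `Qₖₗ Sᵏ_a_b Sˡ_c_d` with self-dual pairs of indices. -/
noncomputable def selfDualTensor (Q : Matrix (Fin 3) (Fin 3) ℂ) (a b c d : Fin 4) : ℂ :=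
  ∑ k, ∑ l, Q k l * selfDualBasis k a b * selfDualBasis l c d

lemma selfDualTensor_eq_mul (Q : Matrix (Fin 3) (Fin 3) ℂ) (a p c m : Fin 4) :
    selfDualTensor Q a p c m =
      ((selfDualSlot (Pi.single a 1))ᵀ * Q * selfDualSlot (Pi.single c 1)) p m := by
  simp only [selfDualTensor, mul_apply, transpose_apply, selfDualSlot_single, Finset.sum_mul]
  rw [Finset.sum_comm]
  simp only [mul_comm (Q _ _)]

lemma sum_eta_mul_re_mul_re (X Y : Matrix (Fin 4) (Fin 4) ℂ) :
    ∑ p, ∑ q, ∑ m, ∑ n, eta p q * eta m n * ((X p m).re * (Y q n).re) =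
      (1 / 2) * ((etaMatrix * X * etaMatrix * Yᵀ).trace.re +
        (etaMatrix * X * etaMatrix * Yᴴ).trace.re) := by
  simp only [mul_assoc, ← Finset.mul_sum, sum_eta_mul, etaMatrix_eq_diagonal, trace, diag_apply,
    mul_apply]
  simp [Fin.sum_univ_four, eta]
  ring

section SelfDualTensor

variable (Q : Matrix (Fin 3) (Fin 3) ℂ)

lemma pairContraction_re_selfDualTensor (a b c d : Fin 4) :
    pairContraction (fun a b c d => (selfDualTensor Q a b c d).re) a b c d =
      (1 / 2) * (
        traceForm Q Qᵀ (cliffordMatrix (Pi.single a 1) (Pi.single b 1))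
          (cliffordMatrix (Pi.single c 1) (Pi.single d 1)) +
        traceForm Q Qᴴ (maxwellMatrix (Pi.single a 1) (Pi.single b 1))
          (maxwellMatrix (Pi.single c 1) (Pi.single d 1))) := by
  simp only [pairContraction, selfDualTensor_eq_mul, sum_eta_mul_re_mul_re, traceForm]
  have hclifford (A B C D : Matrix (Fin 3) (Fin 4) ℂ) :
      (etaMatrix * (Aᵀ * Q * C) * etaMatrix * (Bᵀ * Q * D)ᵀ).trace =
        ((A * etaMatrix * Bᵀ)ᵀ * Q * (C * etaMatrix * Dᵀ) * Qᵀ).trace := by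
    simp only [transpose_mul, transpose_transpose, etaMatrix_transpose, ← Matrix.mul_assoc]
    rw [trace_mul_comm]
    simp only [← Matrix.mul_assoc]
  have hmaxwell (A B C D : Matrix (Fin 3) (Fin 4) ℂ) :
      (etaMatrix * (Aᵀ * Q * C) * etaMatrix * (Bᵀ * Q * D)ᴴ).trace =
        ((A * etaMatrix * Bᴴ)ᵀ * Q * (C * etaMatrix * Dᴴ) * Qᴴ).trace := by
    have hconj : (Bᵀ)ᴴ = (Bᴴ)ᵀ := rfl
    simp only [transpose_mul, conjTranspose_mul, etaMatrix_transpose, ← Matrix.mul_assoc]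
    rw [trace_mul_comm]
    simp only [← Matrix.mul_assoc, hconj]
  simp only [hclifford, hmaxwell, cliffordMatrix, maxwellMatrix]

lemma traceForm_cliffordMatrix_add_swap (u v x y : Fin 4 → ℝ) :
    traceForm Q Qᵀ (cliffordMatrix u v) (cliffordMatrix x y) +
        traceForm Q Qᵀ (cliffordMatrix u v) (cliffordMatrix y x) =
      2 * (∑ a, ∑ b, eta a b * u a * v b) * (∑ a, ∑ b, eta a b * x a * y b) *
        (Q * Qᵀ).trace.re := by
  have hsymm : ((cliffordMatrix u v)ᵀ * (Q * Qᵀ)).trace =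
      (cliffordMatrix u v * (Q * Qᵀ)).trace := by
    rw [← trace_transpose, transpose_mul, transpose_mul, transpose_transpose, transpose_transpose,
      trace_mul_comm]
  have htrace : ((cliffordMatrix u v)ᵀ * (Q * Qᵀ)).trace.re =
      -(∑ a, ∑ b, eta a b * u a * v b) * (Q * Qᵀ).trace.re := by
    have hadd := congr_arg (fun X => (X * (Q * Qᵀ)).trace.re) (cliffordMatrix_add_swap u v)
    simp only [← cliffordMatrix_transpose u v, Matrix.add_mul, trace_add, hsymm, Matrix.smul_mul,
      Matrix.one_mul, trace_smul, Complex.add_re, Complex.smul_re, smul_eq_mul] at hadd ⊢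
    linarith
  rw [← traceForm_add_right, cliffordMatrix_add_swap, traceForm, Matrix.mul_smul, Matrix.mul_one,
    Matrix.smul_mul, trace_smul, Matrix.mul_assoc, Complex.smul_re, htrace, smul_eq_mul]
  ring

lemma sum_eta_mul_pairContraction_re_selfDualTensor :
    ∑ a, ∑ b, ∑ c, ∑ d, eta a b * eta c d *
      pairContraction (fun a b c d => (selfDualTensor Q a b c d).re) a b c d =
      8 * (Q * Qᵀ).trace.re := by
  simp only [pairContraction_re_selfDualTensor, mul_add, mul_left_comm _ (1 / 2 : ℝ),
    Finset.sum_add_distrib, ← Finset.mul_sum, sum_sum_mul_traceForm, sum_eta_smul_cliffordMatrix,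
    sum_eta_smul_maxwellMatrix]
  simp only [traceForm, transpose_smul, transpose_one, transpose_zero, Matrix.smul_mul,
    Matrix.mul_smul, Matrix.one_mul, Matrix.mul_one, Matrix.zero_mul, trace_smul, trace_zero,
    Complex.smul_re, Complex.zero_re, smul_eq_mul]
  ring

lemma belRobinson_re_selfDualTensor (a b c d : Fin 4) :
    belRobinson (fun a b c d => (selfDualTensor Q a b c d).re) a b c d =
      traceForm Q Qᴴ (maxwellMatrix (Pi.single a 1) (Pi.single b 1))
        (maxwellMatrix (Pi.single c 1) (Pi.single d 1)) := by
  have hclifford := traceForm_cliffordMatrix_add_swap Q (Pi.single a 1) (Pi.single b 1)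
    (Pi.single c 1) (Pi.single d 1)
  have hsingle (i j : Fin 4) : ∑ x, ∑ y, eta x y * (Pi.single i 1 : Fin 4 → ℝ) x *
      (Pi.single j 1 : Fin 4 → ℝ) y = eta i j := by
    simp [Pi.single_apply]
  rw [hsingle, hsingle] at hclifford
  rw [belRobinson_eq_pairContraction, sum_eta_mul_pairContraction_re_selfDualTensor,
    pairContraction_re_selfDualTensor, pairContraction_re_selfDualTensor,
    maxwellMatrix_comm (Pi.single d 1)]
  linear_combination (1 / 2) * hclifford

end SelfDualTensor

/-! ### Einstein tensors -/

/-- Algebraic curvature tensors of Einstein type: their Ricci tensor is `r η`, and they have the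
pair symmetries of a curvature tensor. The first Bianchi identity is not part of the definition. -/
structure IsEinstein (W : Fin 4 → Fin 4 → Fin 4 → Fin 4 → ℝ) (r : ℝ) : Prop where
  antisymm : ∀ a b c d, W a b c d = -W b a c d
  pair_symm : ∀ a b c d, W a b c d = W c d a b
  ricci : ∀ b c, ∑ p, ∑ q, eta p q * W p b q c = r * eta b c

/-- The complex matrix `Q = E - iB` with electric part `Eₖₗ = W₀ₖ₀ₗ` and magnetic part
`Bₖₗ = ½ εₗᵢⱼ W₀ₖᵢⱼ`. -/
noncomputable def weylMatrix (W : Fin 4 → Fin 4 → Fin 4 → Fin 4 → ℝ) : Matrix (Fin 3) (Fin 3) ℂ :=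
  of fun k l => W 0 k.succ 0 l.succ - W 0 k.succ (l + 1).succ (l + 2).succ * Complex.I

lemma antisymm_ext {F G : Fin 4 → Fin 4 → ℝ} (hF : ∀ a b, F a b = -F b a)
    (hG : ∀ a b, G a b = -G b a) (htime : ∀ k : Fin 3, F 0 k.succ = G 0 k.succ)
    (hspace : ∀ k : Fin 3, F (k + 1).succ (k + 2).succ = G (k + 1).succ (k + 2).succ)
    (a b : Fin 4) : F a b = G a b := by
  have h1 := htime 0
  have h2 := htime 1
  have h3 := htime 2
  have h23 := hspace 0
  have h31 := hspace 1
  have h12 := hspace 2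
  fin_cases a <;> fin_cases b <;> simp at * <;> grind

section Einstein

variable {W : Fin 4 → Fin 4 → Fin 4 → Fin 4 → ℝ} {r : ℝ}

lemma IsEinstein.ricci_apply (hW : IsEinstein W r) (b c : Fin 4) :
    -W 0 b 0 c + W 1 b 1 c + W 2 b 2 c + W 3 b 3 c = r * eta b c := by
  rw [← hW.ricci]
  simp [Fin.sum_univ_four, eta]

lemma IsEinstein.spatial_spatial_eq_neg (hW : IsEinstein W r) (k l : Fin 3) :
    W (k + 1).succ (k + 2).succ (l + 1).succ (l + 2).succ = -W 0 k.succ 0 l.succ := by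
  have hanti := hW.antisymm
  have hpair := hW.pair_symm
  -- For `k = l` the four diagonal equations are needed, otherwise the one with indices `k` and `l`.
  have h00 := hW.ricci_apply 0 0
  have h11 := hW.ricci_apply 1 1
  have h22 := hW.ricci_apply 2 2
  have h33 := hW.ricci_apply 3 3
  have hkl := hW.ricci_apply k.succ l.succ
  clear hW
  fin_cases k <;> fin_cases l <;> simp [eta] at * <;> grind

lemma IsEinstein.spatial_temporal_eq (hW : IsEinstein W r) (k l : Fin 3) :
    W (k + 1).succ (k + 2).succ 0 l.succ = W 0 k.succ (l + 1).succ (l + 2).succ := by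
  have hanti := hW.antisymm
  have hpair := hW.pair_symm
  have h01 := hW.ricci_apply 0 1
  have h02 := hW.ricci_apply 0 2
  have h03 := hW.ricci_apply 0 3
  clear hW
  fin_cases k <;> fin_cases l <;> simp [eta] at * <;> grind

lemma IsEinstein.eq_re_selfDualTensor (hW : IsEinstein W r) (a b c d : Fin 4) :
    W a b c d = (selfDualTensor (weylMatrix W) a b c d).re := by
  set S := selfDualTensor (weylMatrix W) with hS
  have hS₁ (a b c d) : (S a b c d).re = -(S b a c d).re := by
    simp [hS, selfDualTensor, selfDualBasis_antisymm _ a b]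
  have hS₂ (a b c d) : (S a b c d).re = -(S a b d c).re := by
    simp [hS, selfDualTensor, selfDualBasis_antisymm _ c d]
  have hW₂ (a b c d) : W a b c d = -W a b d c := by
    rw [hW.pair_symm a b, hW.antisymm, hW.pair_symm d c]
  refine antisymm_ext (hW.antisymm · · c d) (hS₁ · · c d) (fun k => ?_) (fun k => ?_) a b <;>
    refine antisymm_ext (hW₂ _ _) (hS₂ _ _) (fun l => ?_) (fun l => ?_) c d <;>
    simp [hS, selfDualTensor, selfDualBasis_zero_succ, selfDualBasis_succ_succ, weylMatrix,
      hW.spatial_temporal_eq, hW.spatial_spatial_eq_neg]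

lemma IsEinstein.belRobinson_eq (hW : IsEinstein W r) (a b c d : Fin 4) :
    belRobinson W a b c d = traceForm (weylMatrix W) (weylMatrix W)ᴴ
      (maxwellMatrix (Pi.single a 1) (Pi.single b 1))
      (maxwellMatrix (Pi.single c 1) (Pi.single d 1)) := by
  rw [← belRobinson_re_selfDualTensor]
  simp only [← hW.eq_re_selfDualTensor]

lemma IsEinstein.sum_belRobinson_mul (hW : IsEinstein W r) (u₁ u₂ u₃ u₄ : Fin 4 → ℝ) :
    ∑ a, ∑ b, ∑ c, ∑ d, belRobinson W a b c d * u₁ a * u₂ b * u₃ c * u₄ d =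
      traceForm (weylMatrix W) (weylMatrix W)ᴴ (maxwellMatrix u₁ u₂) (maxwellMatrix u₃ u₄) := by
  rw [maxwellMatrix_eq_sum u₁, maxwellMatrix_eq_sum u₃, ← sum_sum_mul_traceForm]
  simp only [hW.belRobinson_eq, mul_assoc, mul_comm, mul_left_comm]

end Einstein

theorem stmt_11_general {W : Fin 4 → Fin 4 → Fin 4 → Fin 4 → ℝ} {r : ℝ} (hW : IsEinstein W r)
    {u₁ u₂ u₃ u₄ : Fin 4 → ℝ} (h₁ : IsFutureCausal u₁) (h₂ : IsFutureCausal u₂)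
    (h₃ : IsFutureCausal u₃) (h₄ : IsFutureCausal u₄) :
    0 ≤ ∑ a, ∑ b, ∑ c, ∑ d, belRobinson W a b c d * u₁ a * u₂ b * u₃ c * u₄ d := by
  rw [hW.sum_belRobinson_mul]
  exact traceForm_conjTranspose_nonneg _ (posSemidef_maxwellMatrix h₁ h₂)
    (posSemidef_maxwellMatrix h₃ h₄)

/-- Generalized dominant property: the Bel–Robinson tensor of a Weyl candidate,
contracted with four causal future-directed vectors, is non-negative. -/
theorem stmt_11 (W : Fin 4 → Fin 4 → Fin 4 → Fin 4 → ℝ) (hW : IsWeylCandidate W)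
    (u₁ u₂ u₃ u₄ : Fin 4 → ℝ)
    (h₁ : (∑ a : Fin 4, ∑ b : Fin 4, eta a b * u₁ a * u₁ b) ≤ 0 ∧ 0 < u₁ 0)
    (h₂ : (∑ a : Fin 4, ∑ b : Fin 4, eta a b * u₂ a * u₂ b) ≤ 0 ∧ 0 < u₂ 0)
    (h₃ : (∑ a : Fin 4, ∑ b : Fin 4, eta a b * u₃ a * u₃ b) ≤ 0 ∧ 0 < u₃ 0)
    (h₄ : (∑ a : Fin 4, ∑ b : Fin 4, eta a b * u₄ a * u₄ b) ≤ 0 ∧ 0 < u₄ 0) :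
    0 ≤ ∑ a : Fin 4, ∑ b : Fin 4, ∑ c : Fin 4, ∑ d : Fin 4,
      belRobinson W a b c d * u₁ a * u₂ b * u₃ c * u₄ d :=
  stmt_11_general (r := 0) ⟨hW.1, hW.2.2.1, by simpa using hW.2.2.2.2⟩ h₁ h₂ h₃ h₄
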